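/- arXiv:2410.19270 — 2 statements merged into one kernel-verified Lean document; each statement's English description precedes it below -/
import Mathlib

section
/- Let H be a complex separable Hilbert space, and let Φ: T(H) → T(H) be a channel given by Φ(X) = Σ_{k=1}^∞ E_k X E_k* with rank-one operators E_k = u_k v_k*, where u_k, v_k ∈ H are nonzero vectors, ‖u_k‖ = 1 for all k, and Σ_{k=1}^∞ v_k v_k* = I_H (strong operator topology). If an orthogonal projection P ∈ B(H) satisfies Φ*(P) = P, where Φ*(Y) = Σ_{k=1}^∞ E_k* Y E_k is the dual map, then for every k the vectors u_k and v_k are eigenvectors of P; in particular P v_k = ⟨u_k, P u_k⟩ v_k for all k. -/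
noncomputable section

open scoped ComplexInnerProductSpace
open ContinuousLinearMap Filter Topology

/-- The rank-one operator `u v*`, i.e. `x ↦ ⟪v, x⟫ • u`. -/
def rankOne {H K : Type*} [NormedAddCommGroup H] [InnerProductSpace ℂ H]
    [NormedAddCommGroup K] [InnerProductSpace ℂ K] (u : K) (v : H) : H →L[ℂ] K :=
  (ContinuousLinearMap.toSpanSingleton ℂ u).comp (innerSL ℂ v)

/-- An operator is trace class iff the sums `∑ |⟪f i, T (e i)⟫|` over finite orthonormal
families are uniformly bounded (the supremum being the trace norm). -/
def IsTraceClass {H K : Type*} [NormedAddCommGroup H] [InnerProductSpace ℂ H]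
    [NormedAddCommGroup K] [InnerProductSpace ℂ K] (T : H →L[ℂ] K) : Prop :=
  ∃ C : ℝ, ∀ (n : ℕ) (e : Fin n → H) (f : Fin n → K),
    Orthonormal ℂ e → Orthonormal ℂ f → (∑ i, ‖⟪f i, T (e i)⟫‖) ≤ C

/-- The trace norm of an operator. -/
def traceNorm {H K : Type*} [NormedAddCommGroup H] [InnerProductSpace ℂ H]
    [NormedAddCommGroup K] [InnerProductSpace ℂ K] (T : H →L[ℂ] K) : ℝ :=
  sSup { r : ℝ | ∃ (n : ℕ) (e : Fin n → H) (f : Fin n → K),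
    Orthonormal ℂ e ∧ Orthonormal ℂ f ∧ r = ∑ i, ‖⟪f i, T (e i)⟫‖ }

/-- A fixed Hilbert basis of a Hilbert space. -/
def stdONB (H : Type*) [NormedAddCommGroup H] [InnerProductSpace ℂ H] [CompleteSpace H] :
    HilbertBasis (exists_hilbertBasis ℂ H).choose ℂ H :=
  (exists_hilbertBasis ℂ H).choose_spec.choose

/-- The trace of a (trace-class) operator. -/
def Tr {H : Type*} [NormedAddCommGroup H] [InnerProductSpace ℂ H] [CompleteSpace H]
    (T : H →L[ℂ] H) : ℂ :=
  ∑' i, ⟪stdONB H i, T (stdONB H i)⟫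

/-- Convergence of a series of operators in trace norm. -/
def HasSumTN {H K : Type*} [NormedAddCommGroup H] [InnerProductSpace ℂ H]
    [NormedAddCommGroup K] [InnerProductSpace ℂ K] {ι : Type*}
    (f : ι → (H →L[ℂ] K)) (T : H →L[ℂ] K) : Prop :=
  Filter.Tendsto (fun s : Finset ι => traceNorm (T - ∑ k ∈ s, f k)) Filter.atTop (nhds 0)

/-- A state: a positive trace-class operator with trace one. -/
def IsState {H : Type*} [NormedAddCommGroup H] [InnerProductSpace ℂ H] [CompleteSpace H]
    (ρ : H →L[ℂ] H) : Prop :=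
  IsTraceClass ρ ∧ ρ.IsPositive ∧ Tr ρ = 1

/-- Positivity of a finite matrix of operators, viewed as a block operator. -/
def MatPos {H : Type*} [NormedAddCommGroup H] [InnerProductSpace ℂ H] {n : ℕ}
    (M : Fin n → Fin n → (H →L[ℂ] H)) : Prop :=
  ∀ x : Fin n → H,
    0 ≤ (∑ i, ∑ j, ⟪x i, M i j (x j)⟫).re ∧ (∑ i, ∑ j, ⟪x i, M i j (x j)⟫).im = 0

/-- Complete positivity of a linear map on trace-class operators. -/
def IsCompletelyPositive {H K : Type*} [NormedAddCommGroup H] [InnerProductSpace ℂ H]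
    [NormedAddCommGroup K] [InnerProductSpace ℂ K]
    (Φ : (H →L[ℂ] H) →ₗ[ℂ] (K →L[ℂ] K)) : Prop :=
  ∀ (n : ℕ) (M : Fin n → Fin n → (H →L[ℂ] H)),
    (∀ i j, IsTraceClass (M i j)) → MatPos M → MatPos fun i j => Φ (M i j)

/-- A quantum channel: a completely positive trace-preserving linear map on
trace-class operators. -/
structure IsChannel {H K : Type*} [NormedAddCommGroup H] [InnerProductSpace ℂ H]
    [CompleteSpace H] [NormedAddCommGroup K] [InnerProductSpace ℂ K] [CompleteSpace K]
    (Φ : (H →L[ℂ] H) →ₗ[ℂ] (K →L[ℂ] K)) : Prop where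
  maps_traceClass : ∀ X : H →L[ℂ] H, IsTraceClass X → IsTraceClass (Φ X)
  completelyPositive : IsCompletelyPositive Φ
  tracePreserving : ∀ X : H →L[ℂ] H, IsTraceClass X → Tr (Φ X) = Tr X

/-- Strongly entanglement breaking channel: admits a Holevo (measure-and-prepare) form
`Φ(X) = ∑ₖ Tr(Fₖ X) Rₖ` with states `Rₖ` and positive `Fₖ` with `∑ₖ Fₖ = I` (SOT). -/
def IsSEB {H K : Type*} [NormedAddCommGroup H] [InnerProductSpace ℂ H] [CompleteSpace H]
    [NormedAddCommGroup K] [InnerProductSpace ℂ K] [CompleteSpace K]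
    (Φ : (H →L[ℂ] H) →ₗ[ℂ] (K →L[ℂ] K)) : Prop :=
  ∃ (R : ℕ → (K →L[ℂ] K)) (F : ℕ → (H →L[ℂ] H)),
    (∀ k, IsState (R k)) ∧ (∀ k, (F k).IsPositive) ∧
    (∀ x : H, HasSum (fun k => F k x) x) ∧
    ∀ X : H →L[ℂ] H, IsTraceClass X → HasSumTN (fun k => Tr (F k * X) • R k) (Φ X)

/-- The weak* topology on `B(H)`, induced by the pairing with trace-class operators. -/
def weakStarTopology (H : Type*) [NormedAddCommGroup H] [InnerProductSpace ℂ H]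
    [CompleteSpace H] : TopologicalSpace (H →L[ℂ] H) :=
  TopologicalSpace.induced
    (fun Y => fun X : { X : H →L[ℂ] H // IsTraceClass X } => Tr ((X : H →L[ℂ] H) * Y))
    inferInstance

/-!
A fixed projection of a unital map `Y ↦ ∑ₖ Eₖ* Y Eₖ` commutes with every `Eₖ`: if `P x = 0`, then
`∑ₖ ‖P Eₖ x‖² = ⟪x, P x⟫ = 0`, so every `Eₖ` preserves the kernel of `P`; by unitality `1 - P` is
fixed as well, so every `Eₖ` also preserves the range of `P`. For `Eₖ = uₖ vₖ*` the commutation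
relation reads `(P uₖ) vₖ* = uₖ (P vₖ)*`, and the factors of a nonzero rank-one operator are unique
up to scalars. If the map takes a projection `Q` to a projection `P`, the same argument gives
`Q Eₖ = Eₖ P`.
-/

section

open scoped InnerProductSpace InnerProduct

variable {𝕜 H K ι : Type*} [RCLike 𝕜]
  [NormedAddCommGroup H] [InnerProductSpace 𝕜 H]
  [NormedAddCommGroup K] [InnerProductSpace 𝕜 K]

theorem eq_inner_smul_of_rankOne_eq_rankOne {u a : K} {v b : H} (hu : ‖u‖ = 1) (hv : v ≠ 0)
    (h : InnerProductSpace.rankOne 𝕜 a v = InnerProductSpace.rankOne 𝕜 u b) :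
    a = ⟪u, a⟫_𝕜 • u ∧ b = ⟪a, u⟫_𝕜 • v := by
  have h_smul (x : H) : ⟪v, x⟫_𝕜 • a = ⟪b, x⟫_𝕜 • u := DFunLike.congr_fun h x
  have h_inner (x : H) : ⟪b, x⟫_𝕜 = ⟪v, x⟫_𝕜 * ⟪u, a⟫_𝕜 := by
    simpa [inner_smul_right, inner_self_eq_norm_sq_to_K, hu] using
      (congrArg (inner 𝕜 u) (h_smul x)).symm
  constructor
  · refine smul_right_injective K (inner_self_ne_zero (𝕜 := 𝕜).2 hv) ?_
    simp only [h_smul, h_inner, mul_smul]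
  · refine ext_inner_right 𝕜 fun x => ?_
    rw [h_inner, inner_smul_left, inner_conj_symm, mul_comm]

theorem eigenvectors_of_comp_rankOne_eq_rankOne_comp [CompleteSpace H]
    {A : K →L[𝕜] K} {B : H →L[𝕜] H} {u : K} {v : H} (hu : ‖u‖ = 1) (hv : v ≠ 0)
    (h : A ∘L InnerProductSpace.rankOne 𝕜 u v = InnerProductSpace.rankOne 𝕜 u v ∘L B) :
    A u = ⟪u, A u⟫_𝕜 • u ∧ (B†) v = ⟪A u, u⟫_𝕜 • v :=
  eq_inner_smul_of_rankOne_eq_rankOne hu hv <| by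
    rwa [InnerProductSpace.comp_rankOne, InnerProductSpace.rankOne_comp] at h

variable [CompleteSpace H] [CompleteSpace K]

theorem apply_eq_zero_of_hasSum_adjoint_comp_self {T : ι → H →L[𝕜] K} {x : H}
    (h : HasSum (fun k => ((T k)† ∘L T k) x) 0) (k : ι) : T k x = 0 := by
  have h_norm_sq : HasSum (fun k => ‖T k x‖ ^ 2) 0 := by
    simpa only [apply_norm_sq_eq_inner_adjoint_right, innerSL_apply_apply, RCLike.reCLM_apply,
      map_zero] using (h.mapL (innerSL 𝕜 x)).mapL RCLike.reCLM
  have h_terms := (hasSum_zero_iff_of_nonneg fun k => sq_nonneg ‖T k x‖).1 h_norm_sq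
  simpa using congrFun h_terms k

theorem adjoint_comp_comp_self_of_isStarProjection {Q : K →L[𝕜] K} (hQ : IsStarProjection Q)
    (E : H →L[𝕜] K) : (Q ∘L E)† ∘L (Q ∘L E) = E† ∘L Q ∘L E := by
  have hQQ : Q ∘L Q = Q := hQ.isIdempotentElem
  rw [adjoint_comp, hQ.isSelfAdjoint.adjoint_eq, comp_assoc, ← comp_assoc Q, hQQ]

theorem isStarProjection_apply_eq_zero_of_hasSum_adjoint_comp {Q : K →L[𝕜] K}
    (hQ : IsStarProjection Q) {E : ι → H →L[𝕜] K} {x : H}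
    (h : HasSum (fun k => ((E k)† ∘L Q ∘L E k) x) 0) (k : ι) : Q (E k x) = 0 := by
  simp only [← adjoint_comp_comp_self_of_isStarProjection hQ] at h
  exact apply_eq_zero_of_hasSum_adjoint_comp_self h k

theorem isStarProjection_comp_kraus_eq_kraus_comp {Q : K →L[𝕜] K} {P : H →L[𝕜] H}
    (hQ : IsStarProjection Q) (hP : IsIdempotentElem P) {E : ι → H →L[𝕜] K}
    (h_unital : ∀ x, HasSum (fun k => ((E k)† ∘L E k) x) x)
    (h_map : ∀ x, HasSum (fun k => ((E k)† ∘L Q ∘L E k) x) (P x)) (k : ι) :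
    Q ∘L E k = E k ∘L P := by
  have hPP (x : H) : P (P x) = P x := DFunLike.congr_fun hP.eq x
  have h_compl (x : H) : HasSum (fun k => ((E k)† ∘L (1 - Q) ∘L E k) x) (x - P x) := by
    simpa using (h_unital x).sub (h_map x)
  ext x
  have h_ker : Q (E k (x - P x)) = 0 :=
    isStarProjection_apply_eq_zero_of_hasSum_adjoint_comp hQ
      (by simpa [hPP] using h_map (x - P x)) k
  have h_range : (1 - Q) (E k (P x)) = 0 :=
    isStarProjection_apply_eq_zero_of_hasSum_adjoint_comp hQ.one_sub
      (by simpa [hPP] using h_compl (P x)) k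
  calc Q (E k x) = Q (E k (P x)) := by simpa [sub_eq_zero] using h_ker
    _ = E k (P x) := (sub_eq_zero.1 h_range).symm

theorem fixed_projection_eigenvectors_general {u : ι → K} {v : ι → H}
    (hv0 : ∀ k, v k ≠ 0) (hu : ∀ k, ‖u k‖ = 1) (hv : ∀ x, HasSum (fun k => ⟪v k, x⟫_𝕜 • v k) x)
    {E : ι → H →L[𝕜] K} (hE : ∀ k, E k = InnerProductSpace.rankOne 𝕜 (u k) (v k))
    {Q : K →L[𝕜] K} {P : H →L[𝕜] H} (hQ : IsStarProjection Q) (hP : IsStarProjection P)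
    (h_map : ∀ x, HasSum (fun k => ((E k)† ∘L Q ∘L E k) x) (P x)) (k : ι) :
    Q (u k) = ⟪u k, Q (u k)⟫_𝕜 • u k ∧ P (v k) = ⟪u k, Q (u k)⟫_𝕜 • v k := by
  have h_unital (x : H) : HasSum (fun k => ((E k)† ∘L E k) x) x := by
    simpa [hE, inner_smul_right, inner_self_eq_norm_sq_to_K, hu] using hv x
  have h_comm := isStarProjection_comp_kraus_eq_kraus_comp hQ hP.isIdempotentElem h_unital h_map k
  rw [hE] at h_comm
  have h_eigen := eigenvectors_of_comp_rankOne_eq_rankOne_comp (hu k) (hv0 k) h_comm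
  rwa [hP.isSelfAdjoint.adjoint_eq, hQ.isSelfAdjoint.isSymmetric.apply_clm] at h_eigen

end

/-- If an orthogonal projection `P` is a fixed point of the dual map
`Φ*(Y) = ∑ₖ Eₖ* Y Eₖ` of a channel with rank-one Kraus operators `Eₖ = uₖ vₖ*`
(with `uₖ, vₖ ≠ 0`, `‖uₖ‖ = 1`, `∑ₖ vₖ vₖ* = I` in SOT), then every `uₖ` and `vₖ` is
an eigenvector of `P`; in particular `P vₖ = ⟪uₖ, P uₖ⟫ vₖ`. -/
theorem fixed_projection_eigenvectors
    {H : Type*} [NormedAddCommGroup H] [InnerProductSpace ℂ H] [CompleteSpace H]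
    [TopologicalSpace.SeparableSpace H]
    (u v : ℕ → H) (hu0 : ∀ k, u k ≠ 0) (hv0 : ∀ k, v k ≠ 0) (hu : ∀ k, ‖u k‖ = 1)
    (hv : ∀ x : H, HasSum (fun k => ⟪v k, x⟫ • v k) x)
    (E : ℕ → (H →L[ℂ] H)) (hE : ∀ k, E k = rankOne (u k) (v k))
    (P : H →L[ℂ] H) (hPsa : IsSelfAdjoint P) (hPidem : P * P = P)
    (hfix : ∀ x : H,
      HasSum (fun k => (ContinuousLinearMap.adjoint (E k) * P * E k) x) (P x)) :
    ∀ k, (∃ beta : ℂ, P (u k) = beta • u k) ∧ P (v k) = ⟪u k, P (u k)⟫ • v k := by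
  intro k
  obtain ⟨h_u, h_v⟩ :=
    fixed_projection_eigenvectors_general hv0 hu hv hE ⟨hPidem, hPsa⟩ ⟨hPidem, hPsa⟩ hfix k
  exact ⟨⟨_, h_u⟩, h_v⟩

end
end

section
/- Let H be a finite-dimensional complex Hilbert space and let N be a self-adjoint linear subspace of trace-zero operators in B(H). Then there exists an entanglement breaking channel Φ on B(H), i.e. a channel of the form Φ(X) = Σ_{k=1}^m Tr(F_k X) R_k with finitely many density matrices R_k and positive semidefinite operators F_k satisfying Σ_{k=1}^m F_k = I_H, such that N = {X ∈ B(H) : Φ(X) = 0}. -/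
noncomputable section

open scoped ComplexInnerProductSpace
open ContinuousLinearMap Filter Topology

/-!
Since `N` is self-adjoint and trace-zero, its orthogonal complement `S` for the trace form
`(X, Y) ↦ Tr (X Y)` is star-closed and contains `1`. Such a space is spanned by positive elements:
`‖a‖ • 1` and `‖a‖ • 1 - a` are positive for self-adjoint `a`. Scaling finitely many of them down
until their sum is at most `1` and adding the remainder gives a POVM `F` spanning `S`; discard its
zero effects. Preparing the state `F k / Tr (F k)` on outcome `k` then defines a channel `Φ` with
`Tr (Φ X * star X) = ∑ k, |Tr (F k * X)| ^ 2 / Tr (F k)`, so `Φ X = 0` exactly when `X` is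
orthogonal to every `F k`, i.e. when `X` lies in the double orthogonal complement `N` of `N`.
-/

section OperatorSystem

variable {A : Type*}

/-- A finite positive operator-valued measure (the outcome statistics of a measurement), encoded by
its effects `F i`: one positive element for each outcome `i`, summing to the unit. -/
structure IsPOVM {ι : Type*} [Fintype ι] [AddCommMonoidWithOne A] [LE A] (F : ι → A) : Prop where
  nonneg : ∀ i, 0 ≤ F i
  sum_eq_one : ∑ i, F i = 1

theorem IsPOVM.exists_fin_ne_zero {ι : Type*} [Fintype ι] [AddCommMonoidWithOne A] [LE A]
    {F : ι → A} (hF : IsPOVM F) :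
    ∃ (m : ℕ) (G : Fin m → A), IsPOVM G ∧ (∀ k, G k ≠ 0) ∧ Set.range G = Set.range F \ {0} := by
  classical
  let e := (Fintype.equivFin {i // F i ≠ 0}).symm
  refine ⟨_, fun k => F (e k), ⟨fun k => hF.nonneg _, ?_⟩, fun k => (e k).2, ?_⟩
  · rw [e.sum_comp fun i => F i, ← hF.sum_eq_one, ← Finset.sum_filter_ne_zero (f := F)]
    exact (Finset.sum_subtype _ (by simp) F).symm
  · change Set.range ((fun i : {i // F i ≠ 0} => F i) ∘ e) = _
    rw [e.surjective.range_comp]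
    ext a
    simp only [Set.mem_range, Subtype.exists, Set.mem_sdiff, Set.mem_singleton_iff]
    grind

variable [CStarAlgebra A] [PartialOrder A] [StarOrderedRing A]

theorem exists_pos_smul_le_one {a : A} (ha : 0 ≤ a) : ∃ c : ℝ, 0 < c ∧ c • a ≤ 1 := by
  have hc : 0 < (‖a‖ + 1)⁻¹ := by positivity
  refine ⟨_, hc, ?_⟩
  rw [← CStarAlgebra.norm_le_one_iff_of_nonneg _ (smul_nonneg hc.le ha), norm_smul,
    Real.norm_of_nonneg hc.le, inv_mul_le_one₀ (by positivity)]
  linarith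

variable {S : Submodule ℂ A}

theorem mem_span_nonneg_of_isSelfAdjoint (hone : 1 ∈ S) {a : A} (ha : IsSelfAdjoint a)
    (haS : a ∈ S) : a ∈ Submodule.span ℂ {p ∈ S | 0 ≤ p} := by
  have hnorm : algebraMap ℝ A ‖a‖ ∈ S := by
    rw [Algebra.algebraMap_eq_smul_one]
    exact S.smul_of_tower_mem _ hone
  rw [← sub_sub_cancel (algebraMap ℝ A ‖a‖) a]
  exact sub_mem (Submodule.subset_span ⟨hnorm, algebraMap_nonneg A (norm_nonneg a)⟩)
    (Submodule.subset_span ⟨sub_mem hnorm haS, sub_nonneg.2 ha.le_algebraMap_norm_self⟩)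

theorem span_nonneg_eq_of_star_mem (hone : 1 ∈ S) (hstar : ∀ a ∈ S, star a ∈ S) :
    Submodule.span ℂ {p ∈ S | 0 ≤ p} = S := by
  refine le_antisymm (Submodule.span_le.2 fun p hp => hp.1) fun a ha => ?_
  have hre : (realPart a : A) ∈ S := by
    rw [realPart_apply_coe]
    exact S.smul_of_tower_mem _ (add_mem ha (hstar a ha))
  have him : (imaginaryPart a : A) ∈ S := by
    rw [imaginaryPart_apply_coe]
    exact S.smul_mem _ (S.smul_of_tower_mem _ (sub_mem ha (hstar a ha)))
  rw [← realPart_add_I_smul_imaginaryPart a]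
  exact add_mem (mem_span_nonneg_of_isSelfAdjoint hone (realPart a).2 hre)
    (Submodule.smul_mem _ _ (mem_span_nonneg_of_isSelfAdjoint hone (imaginaryPart a).2 him))

theorem exists_isPOVM_span_range_eq_of_finset (hone : 1 ∈ S) (T : Finset A)
    (hT : ∀ p ∈ T, 0 ≤ p) (hTS : Submodule.span ℂ (T : Set A) = S) :
    ∃ F : Option T → A, IsPOVM F ∧ Submodule.span ℂ (Set.range F) = S := by
  have hmem (p : T) : (p : A) ∈ S := hTS ▸ Submodule.subset_span p.2
  obtain ⟨c, hc, hle⟩ := exists_pos_smul_le_one (Finset.sum_nonneg fun (p : T) _ => hT p p.2)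
  refine ⟨fun o => o.elim (1 - c • ∑ p : T, (p : A)) fun p => c • (p : A),
    ⟨?_, ?_⟩, le_antisymm (Submodule.span_le.2 ?_) ?_⟩
  · rintro (_ | p)
    · exact sub_nonneg.2 hle
    · exact smul_nonneg hc.le (hT p p.2)
  · simp [Fintype.sum_option, Finset.smul_sum]
  · rintro _ ⟨_ | p, rfl⟩
    · exact sub_mem hone (S.smul_of_tower_mem c (sum_mem fun p _ => hmem p))
    · exact S.smul_of_tower_mem c (hmem p)
  · rw [← hTS, Submodule.span_le]
    intro p hp
    rw [← inv_smul_smul₀ hc.ne' p]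
    exact Submodule.smul_of_tower_mem _ _ (Submodule.subset_span ⟨some ⟨p, hp⟩, rfl⟩)

theorem exists_isPOVM_ne_zero_span_range_eq [FiniteDimensional ℂ S] (hone : 1 ∈ S)
    (hstar : ∀ a ∈ S, star a ∈ S) :
    ∃ (m : ℕ) (F : Fin m → A), IsPOVM F ∧ (∀ k, F k ≠ 0) ∧
      Submodule.span ℂ (Set.range F) = S := by
  have hspan := span_nonneg_eq_of_star_mem hone hstar
  obtain ⟨T, hTsub, hT⟩ := (Submodule.fg_span_iff_fg_span_finset_subset _).1
    (hspan.symm ▸ Module.Finite.iff_fg.1 ‹FiniteDimensional ℂ S›)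
  obtain ⟨F, hF, hFS⟩ := exists_isPOVM_span_range_eq_of_finset hone T (fun p hp => (hTsub hp).2)
    (hT.symm.trans hspan)
  obtain ⟨m, G, hG, hne, hrange⟩ := hF.exists_fin_ne_zero
  exact ⟨m, G, hG, hne, by rw [hrange, Submodule.span_sdiff_singleton_zero, hFS]⟩

end OperatorSystem

section Trace

variable {H : Type*} [NormedAddCommGroup H] [InnerProductSpace ℂ H]

theorem isTraceClass_of_finiteDimensional [FiniteDimensional ℂ H] {K : Type*}
    [NormedAddCommGroup K] [InnerProductSpace ℂ K] (T : H →L[ℂ] K) : IsTraceClass T := by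
  refine ⟨Module.finrank ℂ H * ‖T‖, fun n e f he hf => ?_⟩
  have hn : n ≤ Module.finrank ℂ H := by
    simpa using he.linearIndependent.fintype_card_le_finrank
  have hterm (i : Fin n) : ‖⟪f i, T (e i)⟫‖ ≤ ‖T‖ :=
    calc ‖⟪f i, T (e i)⟫‖ ≤ ‖f i‖ * ‖T (e i)‖ := norm_inner_le_norm _ _
      _ ≤ ‖f i‖ * (‖T‖ * ‖e i‖) := by gcongr; exact T.le_opNorm _
      _ = ‖T‖ := by rw [hf.1 i, he.1 i, one_mul, mul_one]
  calc ∑ i, ‖⟪f i, T (e i)⟫‖ ≤ ∑ _i : Fin n, ‖T‖ := Finset.sum_le_sum fun i _ => hterm i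
    _ = n * ‖T‖ := by simp
    _ ≤ Module.finrank ℂ H * ‖T‖ := by gcongr

theorem Tr_star [CompleteSpace H] (T : H →L[ℂ] H) : Tr (star T) = star (Tr T) := by
  simp only [Tr, star_eq_adjoint, adjoint_inner_right, Complex.star_def, Complex.conj_tsum,
    inner_conj_symm]

variable [FiniteDimensional ℂ H]

theorem Tr_eq_trace (T : H →L[ℂ] H) : Tr T = LinearMap.trace ℂ H T := by
  have : Finite (exists_hilbertBasis ℂ H).choose := (stdONB H).orthonormal.linearIndependent.finite
  have := Fintype.ofFinite (exists_hilbertBasis ℂ H).choose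
  rw [Tr, tsum_fintype, LinearMap.trace_eq_sum_inner _ (stdONB H).toOrthonormalBasis]
  simp

theorem Tr_mul_comm (S T : H →L[ℂ] H) : Tr (S * T) = Tr (T * S) := by
  simp only [Tr_eq_trace]
  exact LinearMap.trace_mul_comm ℂ S.toLinearMap T.toLinearMap

theorem Tr_rankOne_mul (u v : H) (T : H →L[ℂ] H) :
    Tr (InnerProductSpace.rankOne ℂ u v * T) = ⟪v, T u⟫ := by
  rw [Tr_mul_comm, Tr_eq_trace, mul_def, InnerProductSpace.comp_rankOne,
    InnerProductSpace.trace_rankOne]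

theorem Tr_star_mul_self {ι : Type*} [Fintype ι] (b : OrthonormalBasis ι ℂ H) (T : H →L[ℂ] H) :
    Tr (star T * T) = ∑ i, (‖T (b i)‖ ^ 2 : ℂ) := by
  rw [Tr_eq_trace, LinearMap.trace_eq_sum_inner _ b]
  simp [star_eq_adjoint, adjoint_inner_right, inner_self_eq_norm_sq_to_K]

open scoped ComplexOrder in
theorem Tr_star_mul_self_pos {T : H →L[ℂ] H} (hT : T ≠ 0) : 0 < Tr (star T * T) := by
  let b := stdOrthonormalBasis ℂ H
  obtain ⟨i, hi⟩ : ∃ i, T (b i) ≠ 0 := by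
    by_contra! h
    exact hT (coe_injective (b.toBasis.ext fun i => by simpa using h i))
  rw [Tr_star_mul_self b]
  norm_cast
  exact Finset.sum_pos' (fun i _ => by positivity) ⟨i, Finset.mem_univ i, by positivity⟩

open scoped ComplexOrder in
theorem Tr_pos {T : H →L[ℂ] H} (hT : 0 ≤ T) (hT0 : T ≠ 0) : 0 < Tr T := by
  obtain ⟨B, rfl⟩ := CStarAlgebra.nonneg_iff_eq_star_mul_self.1 hT
  exact Tr_star_mul_self_pos (right_ne_zero_of_mul hT0)

end Trace

section TraceForm

variable {H : Type*} [NormedAddCommGroup H] [InnerProductSpace ℂ H] [FiniteDimensional ℂ H]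

/-- `Tr` as a linear functional, so that `map_sum` and `map_smul` apply to it. -/
def trLinear (H : Type*) [NormedAddCommGroup H] [InnerProductSpace ℂ H] [FiniteDimensional ℂ H] :
    (H →L[ℂ] H) →ₗ[ℂ] ℂ where
  toFun := Tr
  map_add' S T := by simp [Tr_eq_trace]
  map_smul' c T := by simp [Tr_eq_trace]

@[simp]
theorem trLinear_apply (T : H →L[ℂ] H) : trLinear H T = Tr T := rfl

open scoped ComplexOrder in
theorem isState_inv_Tr_smul {T : H →L[ℂ] H} (hT : 0 ≤ T) (hT0 : T ≠ 0) :
    IsState ((Tr T)⁻¹ • T) := by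
  have hpos := Tr_pos hT hT0
  refine ⟨isTraceClass_of_finiteDimensional _, ?_, ?_⟩
  · exact ((nonneg_iff_isPositive T).1 hT).smul_of_nonneg (inv_pos.2 hpos).le
  · rw [← trLinear_apply, map_smul, trLinear_apply, smul_eq_mul, inv_mul_cancel₀ hpos.ne']

/-- The trace form `(X, Y) ↦ Tr (X Y)` on `B(H)`, taken bilinear (without an adjoint, unlike the
Hilbert–Schmidt inner product) so that orthogonality to `F k` reads `Tr (F k * X) = 0`. -/
def trForm (H : Type*) [NormedAddCommGroup H] [InnerProductSpace ℂ H] [FiniteDimensional ℂ H] :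
    LinearMap.BilinForm ℂ (H →L[ℂ] H) :=
  (LinearMap.mul ℂ (H →L[ℂ] H)).compr₂ (trLinear H)

@[simp]
theorem trForm_apply (X Y : H →L[ℂ] H) : trForm H X Y = Tr (X * Y) := rfl

theorem trForm_isSymm : (trForm H).IsSymm := ⟨Tr_mul_comm⟩

open scoped ComplexOrder in
theorem trForm_nondegenerate : (trForm H).Nondegenerate := by
  refine (LinearMap.IsRefl.nondegenerate_iff_separatingLeft (B := trForm H)
    trForm_isSymm.isRefl).2 fun X hX => ?_
  by_contra hX0
  have hpos := Tr_star_mul_self_pos hX0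
  rw [Tr_mul_comm] at hpos
  exact hpos.ne' (hX (star X))

theorem star_mem_trForm_orthogonal {N : Submodule ℂ (H →L[ℂ] H)}
    (hN : ∀ X ∈ N, star X ∈ N) {Y : H →L[ℂ] H} (hY : Y ∈ (trForm H).orthogonal N) :
    star Y ∈ (trForm H).orthogonal N := by
  intro X hX
  have h : Tr (star X * Y) = 0 := hY _ (hN X hX)
  change Tr (X * star Y) = 0
  rw [Tr_mul_comm, ← star_star X, ← star_mul, Tr_star, h, star_zero]

theorem mem_iff_of_span_range_eq_orthogonal {ι : Type*} {N : Submodule ℂ (H →L[ℂ] H)}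
    {F : ι → (H →L[ℂ] H)} (hF : Submodule.span ℂ (Set.range F) = (trForm H).orthogonal N)
    (X : H →L[ℂ] H) : X ∈ N ↔ ∀ k, Tr (F k * X) = 0 :=
  calc X ∈ N ↔ X ∈ (trForm H).orthogonal (Submodule.span ℂ (Set.range F)) := by
        rw [hF, LinearMap.BilinForm.orthogonal_orthogonal trForm_nondegenerate
          trForm_isSymm.isRefl]
    _ ↔ Submodule.span ℂ (Set.range F) ≤ LinearMap.ker ((trForm H).flip X) := Iff.rfl
    _ ↔ ∀ k, Tr (F k * X) = 0 := by rw [Submodule.span_le, Set.range_subset_iff]; rfl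

end TraceForm

section MatPos

open scoped ComplexOrder

variable {H K : Type*} [NormedAddCommGroup H] [InnerProductSpace ℂ H]
  [NormedAddCommGroup K] [InnerProductSpace ℂ K] {n : ℕ}

theorem matPos_iff_nonneg {M : Fin n → Fin n → (H →L[ℂ] H)} :
    MatPos M ↔ ∀ x : Fin n → H, 0 ≤ ∑ i, ∑ j, ⟪x i, M i j (x j)⟫ := by
  simp only [MatPos, Complex.nonneg_iff, eq_comm]

theorem MatPos.sum {ι : Type*} {s : Finset ι} {M : ι → Fin n → Fin n → (H →L[ℂ] H)}
    (hM : ∀ k ∈ s, MatPos (M k)) : MatPos fun i j => ∑ k ∈ s, M k i j := by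
  refine matPos_iff_nonneg.2 fun x => ?_
  calc 0 ≤ ∑ k ∈ s, ∑ i, ∑ j, ⟪x i, M k i j (x j)⟫ :=
        Finset.sum_nonneg fun k hk => matPos_iff_nonneg.1 (hM k hk) x
    _ = ∑ i, ∑ j, ⟪x i, (∑ k ∈ s, M k i j) (x j)⟫ := by
        simp only [sum_apply, inner_sum]
        rw [Finset.sum_comm]
        exact Finset.sum_congr rfl fun i _ => Finset.sum_comm

theorem MatPos.inner_smul_rankOne {M : Fin n → Fin n → (H →L[ℂ] H)} (hM : MatPos M) (u : H)
    (v : K) : MatPos fun i j => ⟪u, M i j u⟫ • InnerProductSpace.rankOne ℂ v v := by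
  intro x
  have hinner (i j : Fin n) :
      ⟪x i, (⟪u, M i j u⟫ • InnerProductSpace.rankOne ℂ v v) (x j)⟫ =
        ⟪⟪v, x i⟫ • u, M i j (⟪v, x j⟫ • u)⟫ := by
    simp only [smul_apply, map_smul, InnerProductSpace.rankOne_apply, inner_smul_left,
      inner_smul_right, inner_conj_symm]
    ring
  simpa only [hinner] using hM fun i => ⟪v, x i⟫ • u

theorem MatPos.Tr_mul_smul [FiniteDimensional ℂ H] [FiniteDimensional ℂ K]
    {M : Fin n → Fin n → (H →L[ℂ] H)} (hM : MatPos M) {F : H →L[ℂ] H} (hF : F.IsPositive)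
    {R : K →L[ℂ] K} (hR : R.IsPositive) : MatPos fun i j => Tr (F * M i j) • R := by
  obtain ⟨p, u, rfl⟩ := isPositive_iff_eq_sum_rankOne.1 hF
  obtain ⟨q, v, rfl⟩ := isPositive_iff_eq_sum_rankOne.1 hR
  simp only [← trLinear_apply, Finset.sum_mul, map_sum, Finset.sum_smul, Finset.smul_sum]
  simp only [trLinear_apply, Tr_rankOne_mul]
  exact .sum fun a _ => .sum fun b _ => hM.inner_smul_rankOne (u b) (v a)

end MatPos

section MeasureAndPrepare

variable {H K : Type*} [NormedAddCommGroup H] [InnerProductSpace ℂ H] [FiniteDimensional ℂ H]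
  [NormedAddCommGroup K] [InnerProductSpace ℂ K] {ι : Type*} [Fintype ι]

/-- The Holevo form `X ↦ ∑ₖ Tr (Fₖ X) Rₖ`: measure the effects `F`, then prepare the state `R k`
on outcome `k`. -/
def measureAndPrepare (F : ι → (H →L[ℂ] H)) (R : ι → (K →L[ℂ] K)) :
    (H →L[ℂ] H) →ₗ[ℂ] (K →L[ℂ] K) :=
  ∑ k, (trForm H (F k)).smulRight (R k)

theorem measureAndPrepare_apply (F : ι → (H →L[ℂ] H)) (R : ι → (K →L[ℂ] K)) (X : H →L[ℂ] H) :
    measureAndPrepare F R X = ∑ k, Tr (F k * X) • R k := by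
  simp [measureAndPrepare]

theorem isChannel_measureAndPrepare [FiniteDimensional ℂ K] {F : ι → (H →L[ℂ] H)}
    {R : ι → (K →L[ℂ] K)} (hF : IsPOVM F) (hR : ∀ k, IsState (R k)) :
    IsChannel (measureAndPrepare F R) where
  maps_traceClass X _ := isTraceClass_of_finiteDimensional _
  completelyPositive n M _ hM := by
    simp only [measureAndPrepare_apply]
    exact .sum fun k _ => hM.Tr_mul_smul ((nonneg_iff_isPositive _).1 (hF.nonneg k)) (hR k).2.1
  tracePreserving X _ :=
    calc Tr (measureAndPrepare F R X) = ∑ k, Tr (F k * X) := by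
          rw [measureAndPrepare_apply, ← trLinear_apply, map_sum]
          simp [(hR _).2.2]
      _ = Tr X := by
          simp only [← trLinear_apply, ← map_sum, ← Finset.sum_mul, hF.sum_eq_one, one_mul]

open scoped ComplexOrder in
theorem measureAndPrepare_smul_self_eq_zero_iff {F : ι → (H →L[ℂ] H)}
    (hF : ∀ k, IsSelfAdjoint (F k)) {c : ι → ℂ} (hc : ∀ k, 0 < c k) (X : H →L[ℂ] H) :
    measureAndPrepare F (fun k => c k • F k) X = 0 ↔ ∀ k, Tr (F k * X) = 0 := by
  rw [measureAndPrepare_apply]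
  refine ⟨fun h => ?_, fun h => by simp [h]⟩
  have hstar (k : ι) : Tr (F k * star X) = star (Tr (F k * X)) := by
    rw [← Tr_star, star_mul, (hF k).star_eq, Tr_mul_comm]
  have hsum : ∑ k, c k * (Tr (F k * X) * star (Tr (F k * X))) = 0 :=
    calc _ = trForm H (∑ k, Tr (F k * X) • c k • F k) (star X) := by
          simp only [map_sum, map_smul, LinearMap.sum_apply, LinearMap.smul_apply,
            trForm_apply, hstar, smul_eq_mul, mul_left_comm]
      _ = 0 := by rw [h, map_zero, LinearMap.zero_apply]
  rw [Finset.sum_eq_zero_iff_of_nonneg fun k _ =>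
    mul_nonneg (hc k).le (mul_star_self_nonneg _)] at hsum
  intro k
  simpa [(hc k).ne'] using hsum k (Finset.mem_univ k)

open scoped ComplexOrder in
theorem measureAndPrepare_inv_Tr_smul_eq_zero_iff {F : ι → (H →L[ℂ] H)} (hF : ∀ k, 0 ≤ F k)
    (hne : ∀ k, F k ≠ 0) (X : H →L[ℂ] H) :
    measureAndPrepare F (fun k => (Tr (F k))⁻¹ • F k) X = 0 ↔ ∀ k, Tr (F k * X) = 0 :=
  measureAndPrepare_smul_self_eq_zero_iff (fun k => (hF k).isSelfAdjoint)
    (fun k => inv_pos.2 (Tr_pos (hF k) (hne k))) X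

end MeasureAndPrepare

/-- Every self-adjoint subspace of trace-zero operators on a
finite-dimensional complex Hilbert space is the null space of an entanglement
breaking channel `Φ(X) = ∑_{k=1}^m Tr(Fₖ X) Rₖ` (a finite measure-and-prepare form
with density matrices `Rₖ` and positive `Fₖ` summing to the identity). -/
theorem finiteDim_selfAdjoint_traceZero_subspace_is_null_space_of_EB
    {H : Type*} [NormedAddCommGroup H] [InnerProductSpace ℂ H]
    [FiniteDimensional ℂ H]
    (N : Submodule ℂ (H →L[ℂ] H))
    (hN_sa : ∀ X ∈ N, ContinuousLinearMap.adjoint X ∈ N)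
    (hN_tr0 : ∀ X ∈ N, Tr X = 0) :
    ∃ Φ : (H →L[ℂ] H) →ₗ[ℂ] (H →L[ℂ] H),
      IsChannel Φ ∧
      (∃ (m : ℕ) (R F : Fin m → (H →L[ℂ] H)),
        (∀ k, IsState (R k)) ∧ (∀ k, (F k).IsPositive) ∧
        (∑ k, F k) = 1 ∧
        ∀ X : H →L[ℂ] H, Φ X = ∑ k, Tr (F k * X) • R k) ∧
      ∀ X : H →L[ℂ] H, (Φ X = 0 ↔ X ∈ N) := by
  have hone : 1 ∈ (trForm H).orthogonal N := fun X hX => by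
    rw [trForm_apply, mul_one, hN_tr0 X hX]
  obtain ⟨m, F, hF, hne, hspan⟩ := exists_isPOVM_ne_zero_span_range_eq hone fun _ =>
    star_mem_trForm_orthogonal hN_sa
  have hR (k : Fin m) : IsState ((Tr (F k))⁻¹ • F k) := isState_inv_Tr_smul (hF.nonneg k) (hne k)
  refine ⟨measureAndPrepare F _, isChannel_measureAndPrepare hF hR,
    ⟨m, _, F, hR, fun k => (nonneg_iff_isPositive _).1 (hF.nonneg k), hF.sum_eq_one,
      measureAndPrepare_apply F _⟩, fun X => ?_⟩
  rw [mem_iff_of_span_range_eq_orthogonal hspan,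
    measureAndPrepare_inv_Tr_smul_eq_zero_iff hF.nonneg hne]

end
end
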